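/- For every integer n ≥ 2, the homogeneous polynomial g_{2n+2}(x,y) = (x² − y²)(x^{2n} + y^{2n}) of degree 2n+2 is hyperbolic, i.e., its Hessian polynomial is strictly negative on ℝ² \ {(0,0)}. -/

import Mathlib

open MvPolynomial Real

/-- The Hessian polynomial `f_xx * f_yy - f_xy ^ 2` of a bivariate real polynomial. -/
noncomputable def Hess (f : MvPolynomial (Fin 2) ℝ) : MvPolynomial (Fin 2) ℝ :=
  pderiv 0 (pderiv 0 f) * pderiv 1 (pderiv 1 f) - (pderiv 1 (pderiv 0 f)) ^ 2

/-- A bivariate polynomial is hyperbolic if its Hessian is negative off the origin. -/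
def Hyperbolic (f : MvPolynomial (Fin 2) ℝ) : Prop :=
  ∀ x y : ℝ, ¬(x = 0 ∧ y = 0) → eval ![x, y] (Hess f) < 0

/-- The binomial expansion of `(1 + u) ^ k` truncated after the cubic term is a lower bound. -/
theorem cubic_le_one_add_pow (k : ℕ) {u : ℝ} (hu : 0 ≤ u) :
    1 + k * u + k * (k - 1) / 2 * u ^ 2 + k * (k - 1) * (k - 2) / 6 * u ^ 3 ≤ (1 + u) ^ k := by
  induction k with
  | zero => simp
  | succ k ih =>
    have hk : (0 : ℝ) ≤ k * (k - 1) * (k - 2) := by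
      rcases k with _ | _ | k
      · simp
      · simp
      · push_cast
        have : (0 : ℝ) ≤ (k + 2) * (k + 1) * k := by positivity
        linarith
    have hmul := mul_le_mul_of_nonneg_right ih (by linarith : 0 ≤ 1 + u)
    have hrem : 0 ≤ (k : ℝ) * (k - 1) * (k - 2) * u ^ 4 := by positivity
    rw [pow_succ (1 + u)]
    push_cast
    linarith

/-- A cubic whose middle coefficients have negative discriminant is positive on `[0, ∞)`. -/
theorem cubic_pos_of_discrim_neg {p q r s u : ℝ} (hp : 0 < p) (hs : 0 < s)
    (hdisc : r ^ 2 < 4 * q * s) (hu : 0 ≤ u) : 0 < p + q * u + r * u ^ 2 + s * u ^ 3 := by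
  have hquad : 0 < q + r * u + s * u ^ 2 := by
    have : 0 < 4 * s * (q + r * u + s * u ^ 2) := by
      linarith [sq_nonneg (2 * s * u + r)]
    exact pos_of_mul_pos_right this (by linarith)
  linarith [mul_nonneg hu hquad.le]

/-- Minus the Hessian of `(x ^ 2 - y ^ 2) * (x ^ (2 * n) + y ^ (2 * n))`, in terms of
`a = x ^ 2`, `b = y ^ 2`, `A = a ^ (n - 1)` and `B = b ^ (n - 1)`. -/
def negHess (n a b A B : ℝ) : ℝ :=
  ((2 * n + 2) * (2 * n + 1) * (a * A) + 2 * (b * B) - 2 * n * (2 * n - 1) * (b * A)) *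
      ((2 * n + 2) * (2 * n + 1) * (b * B) + 2 * (a * A) - 2 * n * (2 * n - 1) * (a * B)) +
    16 * n ^ 2 * (a * b) * (A - B) ^ 2

theorem negHess_swap (n a b A B : ℝ) : negHess n a b A B = negHess n b a B A := by
  unfold negHess
  ring

theorem negHess_one_add_pos (m : ℕ) {u : ℝ} (hu : 0 ≤ u) :
    0 < negHess (m + 2) (1 + u) 1 ((1 + u) ^ (m + 1)) 1 := by
  have hT := cubic_le_one_add_pow (m + 1) hu
  have hTpos : 0 < (1 + u) ^ (m + 1) := by positivity
  generalize (1 + u) ^ (m + 1) = T at hT hTpos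
  push_cast at hT
  have hm : (0 : ℝ) ≤ m := m.cast_nonneg
  have hk : (0 : ℝ) ≤ (m + 1) * m * (m - 1) := by
    rcases m with _ | m
    · simp
    · push_cast
      have : (0 : ℝ) ≤ (m + 2) * (m + 1) * m := by positivity
      linarith
  generalize (m : ℝ) = m at *
  set α : ℝ := 2 * (1 + u) *
    ((2 * m + 6) * (2 * m + 5) * (1 + u) - (2 * m + 4) * (2 * m + 3) + 8 * (m + 2) ^ 2) with hα
  set β : ℝ := ((2 * m + 6) * (2 * m + 5) * (1 + u) - (2 * m + 4) * (2 * m + 3)) *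
    ((2 * m + 4) * (2 * m + 3) * (1 + u) - (2 * m + 6) * (2 * m + 5)) +
    (32 * (m + 2) ^ 2 - 4) * (1 + u) with hβ
  have hαnonneg : 0 ≤ α := by
    have : α = 2 * (1 + u) * ((2 * m + 6) * (2 * m + 5) * u + 8 * m + 18 + 8 * (m + 2) ^ 2) := by
      rw [hα]; ring
    rw [this]
    positivity
  have hαT : β < α * T := by
    refine lt_of_lt_of_le ?_ (mul_le_mul_of_nonneg_left hT hαnonneg)
    have hcubic := cubic_pos_of_discrim_neg (u := u)
      (p := 300 + 240 * m + 48 * m ^ 2)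
      (q := 460 + 464 * m + 152 * m ^ 2 + 16 * m ^ 3)
      (r := -(140 + 306 * m + 230 * m ^ 2 + 72 * m ^ 3 + 8 * m ^ 4))
      (s := 60 + 502 / 3 * m + 542 / 3 * m ^ 2 + 96 * m ^ 3 + 76 / 3 * m ^ 4 + 8 / 3 * m ^ 5)
      (by positivity) (by positivity)
      (by rw [← sub_pos]; ring_nf; positivity) hu
    have hquartic : 0 ≤ (10 / 3 * m + 94 / 3 * m ^ 2 + 146 / 3 * m ^ 3 + 74 / 3 * m ^ 4 +
      4 * m ^ 5) * u ^ 4 := by positivity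
    have hquintic : 0 ≤ (m + 1) * m * (m - 1) * ((2 * m + 6) * (2 * m + 5) * u ^ 5) :=
      mul_nonneg hk (by positivity)
    rw [hα, hβ]
    linarith
  have hγ : 0 < 2 * ((2 * m + 6) * (2 * m + 5)) + (8 * m ^ 2 + 36 * m + 40) * (1 + u) := by
    positivity
  have hquad := mul_pos (sub_pos.2 hαT) hTpos
  rw [hα, hβ] at hquad
  unfold negHess
  linarith

theorem negHess_pos_of_le (m : ℕ) {a b : ℝ} (hb : 0 ≤ b) (hab : b ≤ a) (ha : 0 < a) :
    0 < negHess (m + 2) a b (a ^ (m + 1)) (b ^ (m + 1)) := by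
  rcases hb.eq_or_lt with rfl | hb
  · simp only [negHess, ne_eq, Nat.succ_ne_zero, not_false_eq_true, zero_pow, mul_zero, zero_mul,
      add_zero, sub_zero, zero_add]
    positivity
  · obtain ⟨u, hu, rfl⟩ : ∃ u : ℝ, 0 ≤ u ∧ a = (1 + u) * b :=
      ⟨a / b - 1, by rw [sub_nonneg, one_le_div hb]; exact hab, by field_simp; ring⟩
    have hscale : negHess (m + 2) ((1 + u) * b) b (((1 + u) * b) ^ (m + 1)) (b ^ (m + 1)) =
        (b * b ^ (m + 1)) ^ 2 * negHess (m + 2) (1 + u) 1 ((1 + u) ^ (m + 1)) 1 := by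
      rw [mul_pow (1 + u)]
      unfold negHess
      ring
    rw [hscale]
    exact mul_pos (by positivity) (negHess_one_add_pos m hu)

theorem eval_Hess_eq_neg_negHess (m : ℕ) (x y : ℝ) :
    eval ![x, y] (Hess ((X 0 ^ 2 - X 1 ^ 2) * (X 0 ^ (2 * (m + 2)) + X 1 ^ (2 * (m + 2))))) =
      -negHess (m + 2) (x ^ 2) (y ^ 2) ((x ^ 2) ^ (m + 1)) ((y ^ 2) ^ (m + 1)) := by
  have hpred : 2 * (m + 2) - 1 = 2 * m + 3 := by omega
  have hpred_pred : 2 * m + 3 - 1 = 2 * m + 2 := by omega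
  have hpderiv_two (i : Fin 2) : pderiv i (2 : MvPolynomial (Fin 2) ℝ) = 0 := (pderiv i).map_natCast 2
  simp [Hess, negHess, pderiv_X, hpred, hpred_pred, hpderiv_two]
  ring

theorem g_hyperbolic (n : ℕ) (hn : 2 ≤ n) :
    Hyperbolic ((X 0 ^ 2 - X 1 ^ 2) * (X 0 ^ (2 * n) + X 1 ^ (2 * n))) := by
  obtain ⟨m, rfl⟩ := Nat.exists_eq_add_of_le' hn
  intro x y hxy
  rw [eval_Hess_eq_neg_negHess, neg_lt_zero]
  rcases le_total (y ^ 2) (x ^ 2) with h | h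
  · refine negHess_pos_of_le m (sq_nonneg y) h ((sq_nonneg x).lt_of_ne' fun hx => hxy ?_)
    rw [hx] at h
    exact ⟨pow_eq_zero_iff two_ne_zero |>.1 hx,
      pow_eq_zero_iff two_ne_zero |>.1 (h.antisymm (sq_nonneg y))⟩
  · rw [negHess_swap]
    refine negHess_pos_of_le m (sq_nonneg x) h ((sq_nonneg y).lt_of_ne' fun hy => hxy ?_)
    rw [hy] at h
    exact ⟨pow_eq_zero_iff two_ne_zero |>.1 (h.antisymm (sq_nonneg x)),
      pow_eq_zero_iff two_ne_zero |>.1 hy⟩
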